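/- (Minimum principle) Let u be a solution of the time-fractional diffusion equation (D_t^α u)(x,t) = ∑_{j=1}^n ∂/∂x_j(p(x) ∂u/∂x_j(x,t)) − q(x)u(x,t) + F(x,t) in Ω_T = G×(0,T), and assume F(x,t) ≥ 0 for all (x,t) ∈ Ω_T. Then for every (x,t) ∈ Ḡ×[0,T] one has u(x,t) ≥ min{0, min_{(y,s) ∈ S_G^T} u(y,s)}, where S_G^T = (Ḡ×{0}) ∪ (S×[0,T]) is the parabolic boundary. -/

import Mathlib

open MeasureTheory Set Filter Topology

/-- The Caputo fractional derivative of order `α` of `f` at `t`: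
`(D^α f)(t) = (1/Γ(1−α)) ∫₀ᵗ (t−s)^{−α} f'(s) ds`. -/
noncomputable def caputo (α : ℝ) (f : ℝ → ℝ) (t : ℝ) : ℝ :=
  (1 / Real.Gamma (1 - α)) * ∫ s in (0:ℝ)..t, (t - s) ^ (-α) * deriv f s

/-- The elliptic part `div(p(x) grad w)(x) = ∑_j ∂/∂x_j (p(x) ∂w/∂x_j)(x)`. -/
noncomputable def divPGrad (n : ℕ) (p : (Fin n → ℝ) → ℝ) (w : (Fin n → ℝ) → ℝ)
    (x : Fin n → ℝ) : ℝ :=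
  ∑ j : Fin n, fderiv ℝ (fun y => p y * fderiv ℝ w y (Pi.single j 1)) x (Pi.single j 1)

/-- `u` is a (classical) solution of the time-fractional diffusion equation
`(D_t^α u)(x,t) = div(p grad u) − q u + F` in `Ω_T = G × (0,T)`:
`u ∈ C(Ḡ×[0,T])`, twice continuously differentiable in `x` on `G`, for each `x ∈ G`
the map `t ↦ u(x,t)` is `C¹` on `(0,T]` with integrable derivative, and the equation
holds pointwise in `Ω_T`. -/
def IsSolutionTFDE (n : ℕ) (α T : ℝ) (G : Set (Fin n → ℝ))
    (p q : (Fin n → ℝ) → ℝ) (F : (Fin n → ℝ) → ℝ → ℝ)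
    (u : (Fin n → ℝ) → ℝ → ℝ) : Prop :=
  ContinuousOn (fun z : (Fin n → ℝ) × ℝ => u z.1 z.2) (closure G ×ˢ Set.Icc 0 T) ∧
  (∀ t ∈ Set.Ioo (0:ℝ) T, ContDiffOn ℝ 2 (fun x => u x t) G) ∧
  (∀ x ∈ G, ContDiffOn ℝ 1 (u x) (Set.Ioc 0 T) ∧
    IntervalIntegrable (deriv (u x)) MeasureTheory.volume 0 T) ∧
  (∀ x ∈ G, ∀ t ∈ Set.Ioo (0:ℝ) T,
    caputo α (u x) t = divPGrad n p (fun y => u y t) x - q x * u x t + F x t)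

theorem second_deriv_nonneg {g : ℝ → ℝ} {x : ℝ} (h : IsLocalMin g x) (hc : ContinuousAt g x) :
    0 ≤ deriv (deriv g) x := by
  by_contra! hneg
  have hmax := isLocalMax_of_deriv_deriv_neg hneg h.deriv_eq_zero hc
  have he : g =ᶠ[𝓝 x] fun _ => g x := by
    filter_upwards [h, hmax] with y h1 h2
    exact le_antisymm h2 h1
  have := he.deriv.deriv_eq
  simp at this
  linarith

theorem divPGrad_nonneg (n : ℕ) (p w : (Fin n → ℝ) → ℝ) (x : Fin n → ℝ)
    (hp : DifferentiableAt ℝ p x) (hp0 : 0 ≤ p x) (hw : ContDiffAt ℝ 2 w x)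
    (hmin : IsLocalMin w x) : 0 ≤ divPGrad n p w x := by
  refine Finset.sum_nonneg fun j _ => ?_
  set e : Fin n → ℝ := Pi.single j 1
  have hdw : DifferentiableAt ℝ (fderiv ℝ w) x :=
    (hw.fderiv_right (m := 1) (by norm_num)).differentiableAt (by norm_num)
  have hd : DifferentiableAt ℝ (fun y => fderiv ℝ w y e) x := hdw.clm_apply (by fun_prop)
  rw [fderiv_fun_mul hp hd]
  have h0 : fderiv ℝ w x = 0 := hmin.fderiv_eq_zero
  simp only [h0, smul_apply, zero_apply, zero_smul, add_zero, smul_eq_mul]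
  refine mul_nonneg hp0 ?_
  have hl : ∀ s : ℝ, HasDerivAt (fun s : ℝ => x + s • e) e s := fun s => by
    simpa using ((hasDerivAt_id s).smul_const e).const_add x
  have hx : x + (0:ℝ) • e = x := by simp
  have hcl : Tendsto (fun s : ℝ => x + s • e) (𝓝 0) (𝓝 x) := by
    have := (hl 0).continuousAt.tendsto
    rwa [hx] at this
  have hev : ∀ᶠ y in 𝓝 x, DifferentiableAt ℝ w y :=
    (hw.eventually (by simp)).mono fun y hy => hy.differentiableAt (by norm_num)
  have h1 : deriv (fun s : ℝ => w (x + s • e)) =ᶠ[𝓝 0] fun s => fderiv ℝ w (x + s • e) e := by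
    filter_upwards [hcl.eventually hev] with s hs
    exact (hs.hasFDerivAt.comp_hasDerivAt s (hl s)).deriv
  have h2 : deriv (fun s : ℝ => fderiv ℝ w (x + s • e) e) 0
      = fderiv ℝ (fun y => fderiv ℝ w y e) x e := by
    have hd' : HasFDerivAt (fun y => fderiv ℝ w y e) (fderiv ℝ (fun y => fderiv ℝ w y e) x)
      (x + (0:ℝ) • e) := by rw [hx]; exact hd.hasFDerivAt
    exact (hd'.comp_hasDerivAt (0:ℝ) (hl 0)).deriv
  rw [← h2, ← h1.deriv_eq]
  apply second_deriv_nonneg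
  · filter_upwards [hcl.eventually hmin] with s hs
    simpa using hs
  · have := hw.continuousAt
    rw [← hx] at this
    exact ContinuousAt.comp (f := fun s : ℝ => x + s • e) (x := (0:ℝ)) this (hl 0).continuousAt

theorem caputo_neg {α T t : ℝ} (hα : 0 < α) (hα1 : α < 1) (ht : t ∈ Ioo 0 T) {f : ℝ → ℝ}
    (hc : ContinuousOn f (Icc 0 T)) (hd : ContDiffOn ℝ 1 f (Ioc 0 T))
    (hi : IntervalIntegrable (deriv f) volume 0 T)
    (hmin : ∀ s ∈ Icc 0 t, f t ≤ f s) (h0 : f t < f 0) : caputo α f t < 0 := by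
  obtain ⟨ht0, htT⟩ := ht
  have hd' : ContDiffOn ℝ 1 f (Ioo 0 T) := hd.mono Ioo_subset_Ioc_self
  have hdiff : ∀ s ∈ Ioo 0 T, HasDerivAt f (deriv f s) s := fun s hs =>
    ((hd'.differentiableOn (by norm_num)).differentiableAt (isOpen_Ioo.mem_nhds hs)).hasDerivAt
  have hcd : ContinuousOn (deriv f) (Ioo 0 T) :=
    hd'.continuousOn_deriv_of_isOpen isOpen_Ioo (by norm_num)
  have hk : ∀ b < t, ContinuousOn (fun s : ℝ => (t - s) ^ (-α)) (Icc 0 b) := fun b hb =>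
    ContinuousOn.rpow_const (by fun_prop) fun s hs => Or.inl (by linarith [hs.2])
  have hint : IntervalIntegrable (fun s => (t - s) ^ (-α) * deriv f s) volume 0 t := by
    apply IntervalIntegrable.trans (b := t / 2)
    · apply IntervalIntegrable.continuousOn_mul
      · refine hi.mono_set ?_
        rw [uIcc_of_le (by linarith), uIcc_of_le (by linarith)]
        exact Icc_subset_Icc_right (by linarith)
      · rw [uIcc_of_le (by linarith)]
        exact hk _ (by linarith)
    · apply IntervalIntegrable.mul_continuousOn
      · have h := (intervalIntegral.intervalIntegrable_rpow' (a := t / 2) (b := 0)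
          (r := -α) (by linarith)).comp_sub_left t
        have e : t - t / 2 = t / 2 := by ring
        rwa [e, sub_zero] at h
      · rw [uIcc_of_le (by linarith)]
        exact hcd.mono fun s hs => ⟨by linarith [hs.1], by linarith [hs.2]⟩
  have hb : ∀ b ∈ Ioo 0 t, ∫ s in (0:ℝ)..b, (t - s) ^ (-α) * deriv f s
      ≤ (t - b) ^ (-α) * (f b - f t) - t ^ (-α) * (f 0 - f t) := by
    intro b hb
    have hsub : uIcc 0 b = Icc 0 b := uIcc_of_le hb.1.le
    have hk' : ContinuousOn (fun s : ℝ => α * (t - s) ^ (-α - 1)) (Icc 0 b) :=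
      continuousOn_const.mul
        (ContinuousOn.rpow_const (by fun_prop) fun s hs => Or.inl (by linarith [hs.2, hb.2]))
    have := intervalIntegral.integral_mul_deriv_eq_deriv_mul_of_hasDerivAt (a := 0) (b := b)
      (u := fun s => (t - s) ^ (-α)) (v := fun s => f s - f t)
      (u' := fun s : ℝ => α * (t - s) ^ (-α - 1)) (v' := deriv f)
      (by rw [hsub]; exact hk b hb.2)
      (by rw [hsub]
          exact (hc.mono (Icc_subset_Icc_right (by linarith [hb.2]))).sub continuousOn_const)
      (by
        intro s hs
        rw [min_eq_left hb.1.le, max_eq_right hb.1.le] at hs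
        have h := ((hasDerivAt_id s).const_sub t).rpow_const (p := -α)
          (Or.inl (by simp only [id]; linarith [hs.2, hb.2]))
        refine HasDerivAt.congr_deriv (f := fun s : ℝ => (t - s) ^ (-α)) h ?_
        simp only [id]; ring)
      (by
        intro s hs
        rw [min_eq_left hb.1.le, max_eq_right hb.1.le] at hs
        exact (hdiff s ⟨hs.1, by linarith [hs.2, hb.2]⟩).sub_const _)
      (by apply ContinuousOn.intervalIntegrable; rwa [hsub])
      (by
        refine hi.mono_set ?_
        rw [hsub, uIcc_of_le (by linarith)]
        exact Icc_subset_Icc_right (by linarith [hb.2]))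
    rw [this]
    have hnn : 0 ≤ ∫ s in (0:ℝ)..b, α * (t - s) ^ (-α - 1) * (f s - f t) := by
      apply intervalIntegral.integral_nonneg hb.1.le
      intro s hs
      have h1 : 0 ≤ t - s := by linarith [hs.2, hb.2]
      have h2 := hmin s ⟨hs.1, by linarith⟩
      exact mul_nonneg (mul_nonneg hα.le (Real.rpow_nonneg h1 _)) (by linarith)
    simp only [sub_zero]
    linarith
  have hlim1 : Tendsto (fun b => ∫ s in (0:ℝ)..b, (t - s) ^ (-α) * deriv f s) (𝓝[<] t)
      (𝓝 (∫ s in (0:ℝ)..t, (t - s) ^ (-α) * deriv f s)) := by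
    have h := intervalIntegral.continuousOn_primitive_interval' hint left_mem_uIcc t right_mem_uIcc
    rw [uIcc_of_le ht0.le] at h
    refine h.mono_left ?_
    rw [← nhdsWithin_Ioo_eq_nhdsLT ht0]
    exact nhdsWithin_mono _ Ioo_subset_Icc_self
  have hlim2 : Tendsto (fun b => (t - b) ^ (-α) * (f b - f t)) (𝓝[<] t) (𝓝 0) := by
    have hs := (hasDerivAt_iff_tendsto_slope.1 (hdiff t ⟨ht0, htT⟩)).mono_left
      (nhdsWithin_mono t (fun b (hb : b < t) => (ne_of_lt hb : b ≠ t)))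
    have hr : Tendsto (fun b : ℝ => (t - b) ^ (1 - α)) (𝓝[<] t) (𝓝 0) := by
      have hcont : Continuous (fun b : ℝ => (t - b) ^ (1 - α)) :=
        Continuous.rpow_const (by fun_prop) fun s => Or.inr (by linarith)
      have := hcont.tendsto t
      rw [sub_self, Real.zero_rpow (by linarith)] at this
      exact this.mono_left nhdsWithin_le_nhds
    have := (hr.mul hs).neg
    rw [zero_mul, neg_zero] at this
    refine this.congr' ?_
    filter_upwards [self_mem_nhdsWithin] with b hb
    have hb' : 0 < t - b := sub_pos.2 hb
    have hb2 : b - t ≠ 0 := by linarith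
    rw [slope_def_field, sub_eq_add_neg 1 α, Real.rpow_add hb', Real.rpow_one]
    field_simp
    ring
  have hle : ∫ s in (0:ℝ)..t, (t - s) ^ (-α) * deriv f s ≤ 0 - t ^ (-α) * (f 0 - f t) := by
    refine le_of_tendsto_of_tendsto hlim1 (hlim2.sub tendsto_const_nhds) ?_
    filter_upwards [Ioo_mem_nhdsLT ht0] with b hb'
    exact hb b hb'
  have hpos : 0 < t ^ (-α) * (f 0 - f t) :=
    mul_pos (Real.rpow_pos_of_pos ht0 _) (by linarith)
  exact mul_neg_of_pos_of_neg (one_div_pos.2 (Real.Gamma_pos_of_pos (by linarith))) (by linarith)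

/-- Minimum principle: if `u` solves the time-fractional diffusion
equation in `Ω_T = G×(0,T)` with `F ≥ 0` in `Ω_T`, then for every
`(x,t) ∈ Ḡ×[0,T]`, `u(x,t) ≥ min{0, inf_{S_G^T} u}` where
`S_G^T = (Ḡ×{0}) ∪ (S×[0,T])` is the parabolic boundary. -/
theorem minimum_principle_TFDE (n : ℕ) (α T : ℝ) (hα : 0 < α) (hα1 : α < 1) (hT : 0 < T)
    (G : Set (Fin n → ℝ)) (hG : IsOpen G) (hGb : Bornology.IsBounded G)
    (p q : (Fin n → ℝ) → ℝ)
    (hp : ContDiffOn ℝ 1 p (closure G)) (hppos : ∀ x ∈ closure G, 0 < p x)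
    (hq : ContinuousOn q (closure G)) (hqnn : ∀ x ∈ closure G, 0 ≤ q x)
    (F : (Fin n → ℝ) → ℝ → ℝ)
    (hF : ContinuousOn (fun z : (Fin n → ℝ) × ℝ => F z.1 z.2) (G ×ˢ Set.Ioo 0 T))
    (u : (Fin n → ℝ) → ℝ → ℝ)
    (hu : IsSolutionTFDE n α T G p q F u)
    (hFpos : ∀ x ∈ G, ∀ t ∈ Set.Ioo (0:ℝ) T, 0 ≤ F x t) :
    ∀ x ∈ closure G, ∀ t ∈ Set.Icc (0:ℝ) T,
      u x t ≥ min 0 (sInf ((fun z : (Fin n → ℝ) × ℝ => u z.1 z.2) ''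
        ((closure G ×ˢ ({0} : Set ℝ)) ∪ (frontier G ×ˢ Set.Icc 0 T)))) := by
  obtain ⟨hcont, hC2, htime, heq⟩ := hu
  have hKc : IsCompact (closure G) := hGb.isCompact_closure
  set S := (closure G ×ˢ ({0} : Set ℝ)) ∪ (frontier G ×ˢ Set.Icc 0 T) with hS
  have hSsub : S ⊆ closure G ×ˢ Set.Icc 0 T := by
    rintro ⟨x, t⟩ (⟨hx, ht⟩ | ⟨hx, ht⟩)
    · have : t = 0 := ht
      subst this
      exact ⟨hx, le_rfl, hT.le⟩
    · exact ⟨frontier_subset_closure hx, ht⟩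
  set m := min 0 (sInf ((fun z : (Fin n → ℝ) × ℝ => u z.1 z.2) '' S)) with hm
  have hbdd : BddBelow ((fun z : (Fin n → ℝ) × ℝ => u z.1 z.2) '' S) :=
    ((hKc.prod isCompact_Icc).image_of_continuousOn hcont).bddBelow.mono (image_mono hSsub)
  have hmS : ∀ z ∈ S, m ≤ u z.1 z.2 := fun z hz =>
    (min_le_right _ _).trans (csInf_le hbdd ⟨z, hz, rfl⟩)
  have key : ∀ x ∈ closure G, ∀ t ∈ Set.Ico (0:ℝ) T, m ≤ u x t := by
    intro x hx t ht
    by_contra! hlt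
    have hsub : closure G ×ˢ Set.Icc 0 t ⊆ closure G ×ˢ Set.Icc 0 T :=
      prod_mono subset_rfl (Icc_subset_Icc_right ht.2.le)
    obtain ⟨⟨x1, t1⟩, ⟨hx1, ht1⟩, hmin⟩ := (hKc.prod (isCompact_Icc (a := 0) (b := t))).exists_isMinOn
      ⟨(x, t), hx, ht.1, le_rfl⟩ (hcont.mono hsub)
    have hmin' : ∀ y ∈ closure G, ∀ s ∈ Set.Icc 0 t, u x1 t1 ≤ u y s :=
      fun y hy s hs => hmin (show (y, s) ∈ closure G ×ˢ Set.Icc 0 t from ⟨hy, hs⟩)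
    simp only at hx1 ht1
    have h1 : u x1 t1 < m := (hmin' x hx t ⟨ht.1, le_rfl⟩).trans_lt hlt
    have ht1T : t1 < T := ht1.2.trans_lt ht.2
    have hnS : (x1, t1) ∉ S := fun h => absurd (hmS _ h) (not_le.2 h1)
    have ht1pos : 0 < t1 := by
      rcases ht1.1.eq_or_lt with h | h
      · exact absurd (Or.inl ⟨hx1, h.symm⟩) hnS
      · exact h
    have hx1G : x1 ∈ G := by
      by_contra hn
      refine hnS (Or.inr ⟨?_, ht1.1, ht1T.le⟩)
      rw [hG.frontier_eq]
      exact ⟨hx1, hn⟩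
    have hGn : G ∈ 𝓝 x1 := hG.mem_nhds hx1G
    have hneg : caputo α (u x1) t1 < 0 := by
      refine caputo_neg hα hα1 ⟨ht1pos, ht1T⟩ ?_ (htime x1 hx1G).1 (htime x1 hx1G).2 ?_ ?_
      · exact hcont.comp (f := fun s : ℝ => (x1, s)) (by fun_prop) fun s hs => ⟨hx1, hs⟩
      · exact fun s hs => hmin' x1 hx1 s ⟨hs.1, hs.2.trans ht1.2⟩
      · exact h1.trans_le (hmS (x1, 0) (Or.inl ⟨hx1, rfl⟩))
    have hdiv : 0 ≤ divPGrad n p (fun y => u y t1) x1 := by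
      refine divPGrad_nonneg n p _ x1 ?_ (hppos x1 hx1).le
        ((hC2 t1 ⟨ht1pos, ht1T⟩).contDiffAt hGn) ?_
      · exact (hp.contDiffAt (mem_of_superset hGn subset_closure)).differentiableAt (by norm_num)
      · filter_upwards [hGn] with y hy
        exact hmin' y (subset_closure hy) t1 ht1
    have hu0 : u x1 t1 < 0 := h1.trans_le (min_le_left _ _)
    have hqu : q x1 * u x1 t1 ≤ 0 := mul_nonpos_of_nonneg_of_nonpos (hqnn x1 hx1) hu0.le
    have := heq x1 hx1G t1 ⟨ht1pos, ht1T⟩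
    have := hFpos x1 hx1G t1 ⟨ht1pos, ht1T⟩
    linarith
  intro x hx t ht
  rcases ht.2.eq_or_lt with h | h
  · subst h
    have hc : ContinuousOn (u x) (Icc 0 t) :=
      hcont.comp (f := fun s : ℝ => (x, s)) (by fun_prop) fun s hs => ⟨hx, hs⟩
    have hl : Tendsto (u x) (𝓝[<] t) (𝓝 (u x t)) := by
      refine (hc t ht).mono_left ?_
      rw [← nhdsWithin_Ioo_eq_nhdsLT hT]
      exact nhdsWithin_mono _ Ioo_subset_Icc_self
    refine ge_of_tendsto hl ?_
    filter_upwards [Ioo_mem_nhdsLT hT] with s hs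
    exact key x hx s ⟨hs.1.le, hs.2⟩
  · exact key x hx t ⟨ht.1, h⟩
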